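/- Let 𝒳, 𝒴, 𝒜, ℬ be finite nonempty sets and set η := 1/(|𝒳|·|𝒴|). Let 0 ≤ l < η < h ≤ 1, let ε > 0 with l − ε ≥ 0, and set μ := min{h − η, η − l}. Then for every behavior P ∈ MDL(l − ε, h + ε) there exists Q ∈ MDL(l, h) with total variation distance δ(P, Q) ≤ ε/(μ + ε). -/

import Mathlib

/-!
The set `MDL(l, h)` contains every behavior whose input distribution is uniform given the hidden
variable. Keep the hidden variable and the local responses of `P`, and mix the input distribution
`P(x,y|γ)` with the uniform one `η`, giving the latter weight `t = ε / (μ + ε)`. As `μ ≤ h - η` and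
`μ ≤ η - l`, this weight pulls the bounds `l - ε` and `h + ε` back to `l` and `h`. The resulting
behavior is `Q = (1 - t) P + t U`, where `U` has uniform inputs and the same responses, so
`δ(P, Q) = t δ(P, U) ≤ t`.

The measure-theoretic content is that a local model is integrable (`integrable_localModel`) and
that it integrates to a probability distribution (`MDLWitness.isBehavior`).
-/

/-- A behavior: probability distribution on `𝒜 × ℬ × 𝒳 × 𝒴`. -/
def IsBehavior {X Y A B : Type} [Fintype X] [Fintype Y] [Fintype A] [Fintype B]
    (P : A → B → X → Y → ℝ) : Prop :=
  (∀ a b x y, 0 ≤ P a b x y) ∧ (∑ a, ∑ b, ∑ x, ∑ y, P a b x y) = 1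

/-- Witness that a behavior lies in the measurement-dependent local set `MDL(l,h)`. -/
structure MDLWitness (X Y A B : Type) [Fintype X] [Fintype Y] [Fintype A] [Fintype B]
    (l h : ℝ) (P : A → B → X → Y → ℝ) where
  HV : Type
  [mHV : MeasurableSpace HV]
  g : MeasureTheory.Measure HV
  prob : MeasureTheory.IsProbabilityMeasure g
  pxy : HV → X → Y → ℝ
  pa : HV → X → A → ℝ
  pb : HV → Y → B → ℝ
  meas_pxy : ∀ x y, Measurable fun γ => pxy γ x y
  meas_pa : ∀ x a, Measurable fun γ => pa γ x a
  meas_pb : ∀ y b, Measurable fun γ => pb γ y b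
  pxy_nonneg : ∀ γ x y, 0 ≤ pxy γ x y
  pxy_sum : ∀ γ, (∑ x, ∑ y, pxy γ x y) = 1
  pa_nonneg : ∀ γ x a, 0 ≤ pa γ x a
  pa_sum : ∀ γ x, (∑ a, pa γ x a) = 1
  pb_nonneg : ∀ γ y b, 0 ≤ pb γ y b
  pb_sum : ∀ γ y, (∑ b, pb γ y b) = 1
  lower : ∀ γ x y, l ≤ pxy γ x y
  upper : ∀ γ x y, pxy γ x y ≤ h
  repr : ∀ a b x y, P a b x y = ∫ γ, pxy γ x y * pa γ x a * pb γ y b ∂g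

/-- Membership in the measurement-dependent local set `MDL(l,h)`. -/
def MemMDL {X Y A B : Type} [Fintype X] [Fintype Y] [Fintype A] [Fintype B]
    (l h : ℝ) (P : A → B → X → Y → ℝ) : Prop :=
  Nonempty (MDLWitness X Y A B l h P)

/-- Witness that a behavior lies in the one-sided average
measurement-dependent local set `AMDL(κ)`. -/
structure AMDLWitness (X Y A B : Type) [Fintype X] [Fintype Y] [Fintype A] [Fintype B]
    [Nonempty X] (κ : ℝ) (P : A → B → X → Y → ℝ) where
  HV : Type
  [mHV : MeasurableSpace HV]
  g : MeasureTheory.Measure HV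
  prob : MeasureTheory.IsProbabilityMeasure g
  px : HV → X → ℝ
  pa : HV → X → A → ℝ
  pb : HV → Y → B → ℝ
  meas_px : ∀ x, Measurable fun γ => px γ x
  meas_pa : ∀ x a, Measurable fun γ => pa γ x a
  meas_pb : ∀ y b, Measurable fun γ => pb γ y b
  px_nonneg : ∀ γ x, 0 ≤ px γ x
  px_sum : ∀ γ, (∑ x, px γ x) = 1
  pa_nonneg : ∀ γ x a, 0 ≤ pa γ x a
  pa_sum : ∀ γ x, (∑ a, pa γ x a) = 1
  pb_nonneg : ∀ γ y b, 0 ≤ pb γ y b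
  pb_sum : ∀ γ y, (∑ b, pb γ y b) = 1
  repr : ∀ a b x y, P a b x y =
    ∫ γ, px γ x * (1 / (Fintype.card Y : ℝ)) * pa γ x a * pb γ y b ∂g
  leak : (∫ γ, ((Finset.univ.sup' Finset.univ_nonempty fun x => px γ x)
      - 1 / (Fintype.card X : ℝ)) ∂g) ≤ κ

/-- Membership in the one-sided average measurement-dependent local set `AMDL(κ)`. -/
def MemAMDL {X Y A B : Type} [Fintype X] [Fintype Y] [Fintype A] [Fintype B]
    [Nonempty X] (κ : ℝ) (P : A → B → X → Y → ℝ) : Prop :=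
  Nonempty (AMDLWitness X Y A B κ P)

/-- Total variation distance between two behaviors. -/
noncomputable def tvDist {X Y A B : Type} [Fintype X] [Fintype Y] [Fintype A] [Fintype B]
    (P Q : A → B → X → Y → ℝ) : ℝ :=
  (1 / 2) * ∑ a, ∑ b, ∑ x, ∑ y, |P a b x y - Q a b x y|

/-- Affine functional on behaviors: `I(P) = I₀ + ∑ v_{abxy} P(a,b,x,y)`. -/
def affFun {X Y A B : Type} [Fintype X] [Fintype Y] [Fintype A] [Fintype B]
    (I₀ : ℝ) (v : A → B → X → Y → ℝ) (P : A → B → X → Y → ℝ) : ℝ :=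
  I₀ + ∑ a, ∑ b, ∑ x, ∑ y, v a b x y * P a b x y

open MeasureTheory

theorem integrable_localModel {Γ : Type} [MeasurableSpace Γ] {g : Measure Γ} [IsFiniteMeasure g]
    {p q r : Γ → ℝ} (hp : Measurable p) (hq : Measurable q) (hr : Measurable r)
    (hp0 : ∀ γ, 0 ≤ p γ) (hp1 : ∀ γ, p γ ≤ 1) (hq0 : ∀ γ, 0 ≤ q γ) (hq1 : ∀ γ, q γ ≤ 1)
    (hr0 : ∀ γ, 0 ≤ r γ) (hr1 : ∀ γ, r γ ≤ 1) :
    Integrable (fun γ => p γ * q γ * r γ) g := by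
  refine Integrable.of_bound ((hp.mul hq).mul hr).aestronglyMeasurable 1 (ae_of_all _ fun γ => ?_)
  rw [Real.norm_of_nonneg (mul_nonneg (mul_nonneg (hp0 γ) (hq0 γ)) (hr0 γ))]
  exact mul_le_one₀ (mul_le_one₀ (hp1 γ) (hq0 γ) (hq1 γ)) (hr0 γ) (hr1 γ)

theorem le_one_of_sum_eq_one {ι : Type} [Fintype ι] {f : ι → ℝ} (h0 : ∀ i, 0 ≤ f i)
    (h1 : ∑ i, f i = 1) (i : ι) : f i ≤ 1 :=
  h1 ▸ Finset.single_le_sum (fun j _ => h0 j) (Finset.mem_univ i)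

section

variable {X Y A B : Type} [Fintype X] [Fintype Y] [Fintype A] [Fintype B] {l h : ℝ}
  {P : A → B → X → Y → ℝ}

attribute [local instance] MDLWitness.mHV MDLWitness.prob

theorem MDLWitness.pxy_le_one (w : MDLWitness X Y A B l h P) (γ : w.HV) (x : X) (y : Y) :
    w.pxy γ x y ≤ 1 :=
  (Finset.single_le_sum (fun y _ => w.pxy_nonneg γ x y) (Finset.mem_univ y)).trans
    (le_one_of_sum_eq_one (fun x => Finset.sum_nonneg fun y _ => w.pxy_nonneg γ x y)
      (w.pxy_sum γ) x)

theorem MDLWitness.integrable (w : MDLWitness X Y A B l h P) (a : A) (b : B) (x : X) (y : Y) :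
    Integrable (fun γ => w.pxy γ x y * w.pa γ x a * w.pb γ y b) w.g :=
  integrable_localModel (w.meas_pxy x y) (w.meas_pa x a) (w.meas_pb y b)
    (fun γ => w.pxy_nonneg γ x y) (fun γ => w.pxy_le_one γ x y)
    (fun γ => w.pa_nonneg γ x a) (fun γ => le_one_of_sum_eq_one (w.pa_nonneg γ x) (w.pa_sum γ x) a)
    (fun γ => w.pb_nonneg γ y b) (fun γ => le_one_of_sum_eq_one (w.pb_nonneg γ y) (w.pb_sum γ y) b)

theorem MDLWitness.isBehavior (w : MDLWitness X Y A B l h P) : IsBehavior P := by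
  refine ⟨fun a b x y => ?_, ?_⟩
  · rw [w.repr]
    exact integral_nonneg fun γ =>
      mul_nonneg (mul_nonneg (w.pxy_nonneg γ x y) (w.pa_nonneg γ x a)) (w.pb_nonneg γ y b)
  · have key : ∀ γ, ∑ a, ∑ b, ∑ x, ∑ y, w.pxy γ x y * w.pa γ x a * w.pb γ y b = 1 := by
      intro γ
      calc ∑ a, ∑ b, ∑ x, ∑ y, w.pxy γ x y * w.pa γ x a * w.pb γ y b
          = ∑ a, ∑ x, ∑ y, ∑ b, w.pxy γ x y * w.pa γ x a * w.pb γ y b := by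
            refine Finset.sum_congr rfl fun a _ => ?_
            rw [Finset.sum_comm]
            exact Finset.sum_congr rfl fun x _ => Finset.sum_comm
        _ = ∑ a, ∑ x, ∑ y, w.pxy γ x y * w.pa γ x a := by
            simp only [← Finset.mul_sum, w.pb_sum, mul_one]
        _ = ∑ x, ∑ y, ∑ a, w.pxy γ x y * w.pa γ x a := by
            rw [Finset.sum_comm]
            exact Finset.sum_congr rfl fun x _ => Finset.sum_comm
        _ = 1 := by
            simp only [← Finset.mul_sum, w.pa_sum, mul_one, w.pxy_sum]
    have hint := w.integrable
    calc ∑ a, ∑ b, ∑ x, ∑ y, P a b x y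
        = ∫ γ, ∑ a, ∑ b, ∑ x, ∑ y, w.pxy γ x y * w.pa γ x a * w.pb γ y b ∂w.g := by
          rw [integral_finsetSum _ fun a _ => integrable_finsetSum _ fun b _ =>
            integrable_finsetSum _ fun x _ => integrable_finsetSum _ fun y _ => hint a b x y]
          refine Finset.sum_congr rfl fun a _ => ?_
          rw [integral_finsetSum _ fun b _ =>
            integrable_finsetSum _ fun x _ => integrable_finsetSum _ fun y _ => hint a b x y]
          refine Finset.sum_congr rfl fun b _ => ?_
          rw [integral_finsetSum _ fun x _ => integrable_finsetSum _ fun y _ => hint a b x y]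
          refine Finset.sum_congr rfl fun x _ => ?_
          rw [integral_finsetSum _ fun y _ => hint a b x y]
          exact Finset.sum_congr rfl fun y _ => w.repr a b x y
      _ = 1 := by simp [key]

/-- The behavior obtained from `w` by replacing the input distribution with the constant `c`,
which is the uniform distribution when `c = 1 / (|X| |Y|)`. -/
noncomputable def MDLWitness.withInput (w : MDLWitness X Y A B l h P) (c : ℝ) :
    A → B → X → Y → ℝ :=
  fun a b x y => ∫ γ, c * w.pa γ x a * w.pb γ y b ∂w.g

/-- The local model of `w` with uniform inputs, seen as an element of `MDL(c, c)`. -/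
noncomputable def MDLWitness.uniform (w : MDLWitness X Y A B l h P) (c : ℝ) (hc0 : 0 ≤ c)
    (hc : ∑ _x : X, ∑ _y : Y, c = 1) : MDLWitness X Y A B c c (w.withInput c) where
  HV := w.HV
  g := w.g
  prob := w.prob
  pxy := fun _ _ _ => c
  pa := w.pa
  pb := w.pb
  meas_pxy := fun _ _ => measurable_const
  meas_pa := w.meas_pa
  meas_pb := w.meas_pb
  pxy_nonneg := fun _ _ _ => hc0
  pxy_sum := fun _ => hc
  pa_nonneg := w.pa_nonneg
  pa_sum := w.pa_sum
  pb_nonneg := w.pb_nonneg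
  pb_sum := w.pb_sum
  lower := fun _ _ _ => le_rfl
  upper := fun _ _ _ => le_rfl
  repr := fun _ _ _ _ => rfl

/-- Mixing the inputs of `w` with uniform inputs, of weight `t`, moves the bounds `l` and `h`
towards `c` by the same convex combination. -/
theorem MDLWitness.mix (w : MDLWitness X Y A B l h P) {c t l' h' : ℝ} (hc0 : 0 ≤ c)
    (hc : ∑ _x : X, ∑ _y : Y, c = 1) (ht0 : 0 ≤ t) (ht1 : t ≤ 1)
    (hl' : l' ≤ (1 - t) * l + t * c) (hh' : (1 - t) * h + t * c ≤ h') :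
    MemMDL l' h' fun a b x y => (1 - t) * P a b x y + t * w.withInput c a b x y := by
  have ht : 0 ≤ 1 - t := sub_nonneg.2 ht1
  exact ⟨{
    HV := w.HV
    g := w.g
    prob := w.prob
    pxy := fun γ x y => (1 - t) * w.pxy γ x y + t * c
    pa := w.pa
    pb := w.pb
    meas_pxy := fun x y => ((w.meas_pxy x y).const_mul _).add_const _
    meas_pa := w.meas_pa
    meas_pb := w.meas_pb
    pxy_nonneg := fun γ x y => add_nonneg (mul_nonneg ht (w.pxy_nonneg γ x y)) (mul_nonneg ht0 hc0)
    pxy_sum := fun γ => by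
      simp only [Finset.sum_add_distrib, ← Finset.mul_sum, w.pxy_sum, hc]
      ring
    pa_nonneg := w.pa_nonneg
    pa_sum := w.pa_sum
    pb_nonneg := w.pb_nonneg
    pb_sum := w.pb_sum
    lower := fun γ x y => hl'.trans (by gcongr; exact w.lower γ x y)
    upper := fun γ x y => le_trans (by gcongr; exact w.upper γ x y) hh'
    repr := fun a b x y => by
      have hU : Integrable (fun γ => c * w.pa γ x a * w.pb γ y b) w.g :=
        (w.uniform c hc0 hc).integrable a b x y
      simp only [w.repr a b x y, MDLWitness.withInput]
      rw [← integral_const_mul, ← integral_const_mul,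
        ← integral_add ((w.integrable a b x y).const_mul _) (hU.const_mul t)]
      exact integral_congr_ae (ae_of_all _ fun γ => by ring) }⟩

end

theorem tvDist_mix_le {X Y A B : Type} [Fintype X] [Fintype Y] [Fintype A] [Fintype B]
    {P U : A → B → X → Y → ℝ} (hP : IsBehavior P) (hU : IsBehavior U) {t : ℝ} (ht : 0 ≤ t) :
    tvDist P (fun a b x y => (1 - t) * P a b x y + t * U a b x y) ≤ t := by
  have hle : ∀ a b x y, |P a b x y - ((1 - t) * P a b x y + t * U a b x y)|
      ≤ t * (P a b x y + U a b x y) := by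
    intro a b x y
    have e : P a b x y - ((1 - t) * P a b x y + t * U a b x y) = t * (P a b x y - U a b x y) := by
      ring
    rw [e, abs_mul, abs_of_nonneg ht]
    have hp := hP.1 a b x y
    have hu := hU.1 a b x y
    gcongr
    exact abs_le.2 ⟨by linarith, by linarith⟩
  have hsum : ∑ a, ∑ b, ∑ x, ∑ y, |P a b x y - ((1 - t) * P a b x y + t * U a b x y)|
      ≤ ∑ a, ∑ b, ∑ x, ∑ y, t * (P a b x y + U a b x y) := by
    gcongr
    exact hle _ _ _ _
  simp only [← Finset.mul_sum, Finset.sum_add_distrib, hP.2, hU.2] at hsum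
  unfold tvDist
  linarith

/-- continuity of the MDL set, case `l < η < h`. -/
theorem mdl_continuity
    (X Y A B : Type) [Fintype X] [Fintype Y] [Fintype A] [Fintype B]
    [Nonempty X] [Nonempty Y] [Nonempty A] [Nonempty B]
    (η l h ε μ : ℝ)
    (hη : η = 1 / ((Fintype.card X : ℝ) * (Fintype.card Y : ℝ)))
    (hl0 : 0 ≤ l) (hlη : l < η) (hηh : η < h) (hh1 : h ≤ 1)
    (hε : 0 < ε) (hlε : 0 ≤ l - ε)
    (hμ : μ = min (h - η) (η - l))
    (P : A → B → X → Y → ℝ) (hP : MemMDL (l - ε) (h + ε) P) :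
    ∃ Q : A → B → X → Y → ℝ, MemMDL l h Q ∧ tvDist P Q ≤ ε / (μ + ε) := by
  obtain ⟨w⟩ := hP
  have hη0 : 0 ≤ η := by rw [hη]; positivity
  have hsum : ∑ _x : X, ∑ _y : Y, η = 1 := by
    simp only [Finset.sum_const, Finset.card_univ, nsmul_eq_mul, hη]
    field_simp
  have hμh : μ ≤ h - η := hμ ▸ min_le_left _ _
  have hμl : μ ≤ η - l := hμ ▸ min_le_right _ _
  have hμ0 : 0 < μ := by rw [hμ]; exact lt_min (by linarith) (by linarith)
  have hpos : 0 < μ + ε := by linarith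
  have ht0 : 0 ≤ ε / (μ + ε) := by positivity
  have ht1 : ε / (μ + ε) ≤ 1 := (div_le_one hpos).2 (by linarith)
  have h1t : 1 - ε / (μ + ε) = μ / (μ + ε) := by field_simp; ring
  refine ⟨_, w.mix hη0 hsum ht0 ht1 ?_ ?_,
    tvDist_mix_le w.isBehavior (w.uniform η hη0 hsum).isBehavior ht0⟩
  · rw [h1t, div_mul_eq_mul_div, div_mul_eq_mul_div, ← add_div, le_div_iff₀ hpos]
    -- The difference of the two sides is `ε * (η - l - μ)`.
    nlinarith [mul_nonneg hε.le (sub_nonneg.2 hμl)]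
  · rw [h1t, div_mul_eq_mul_div, div_mul_eq_mul_div, ← add_div, div_le_iff₀ hpos]
    -- The difference of the two sides is `ε * (h - η - μ)`.
    nlinarith [mul_nonneg hε.le (sub_nonneg.2 hμh)]
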